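/- Let (Fₙ) be the Fibonacci sequence with F₁ = F₂ = 1 and F_{n+2} = F_{n+1} + F_n. Then there exists N such that for all n ≥ N, 3^{Fₙ} / 2^{F_{n+1}} < 1/n. -/

import Mathlib

/-!
Since `F_{n+1} - φ F_n = ψ ^ n`, the quotient `a ^ F_n / b ^ F_{n+1}` equals
`(a / b ^ φ) ^ F_n / b ^ (ψ ^ n)`. The denominator tends to `1` because `|ψ| < 1`, and `F_n ≥ n` for
`n ≥ 5`, so the quotient decays faster than every power of `1 / n` as soon as `|a| < b ^ φ`. Finally
`3 < 2 ^ φ`, because `3 ^ 5 < 2 ^ 8` and `8 / 5 < φ`.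
-/

open Filter Real
open scoped Topology goldenRatio

theorem pow_fib_div_pow_fib_succ_eq (a : ℝ) {b : ℝ} (hb : 0 < b) (n : ℕ) :
    a ^ Nat.fib n / b ^ Nat.fib (n + 1) = (a / b ^ φ) ^ Nat.fib n / b ^ (ψ ^ n) := by
  have hfib : (Nat.fib (n + 1) : ℝ) = φ * Nat.fib n + ψ ^ n := by
    linarith [fib_succ_sub_goldenRatio_mul_fib n]
  have hpow : b ^ Nat.fib (n + 1) = (b ^ φ) ^ Nat.fib n * b ^ (ψ ^ n) := by
    rw [← rpow_natCast, hfib, rpow_add hb, rpow_mul_natCast hb.le]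
  rw [hpow, div_pow a, div_div]

theorem abs_goldenConj_lt_one : |ψ| < 1 :=
  abs_lt.2 ⟨neg_one_lt_goldenConj, goldenConj_neg.trans one_pos⟩

theorem tendsto_rpow_goldenConj_pow {b : ℝ} (hb : b ≠ 0) :
    Tendsto (fun n : ℕ ↦ b ^ (ψ ^ n)) atTop (𝓝 1) := by
  have hψ : Tendsto (fun n : ℕ ↦ ψ ^ n) atTop (𝓝 0) :=
    tendsto_pow_atTop_nhds_zero_of_abs_lt_one abs_goldenConj_lt_one
  have hcont : Tendsto (fun x : ℝ ↦ b ^ x) (𝓝 0) (𝓝 1) := by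
    simpa only [rpow_zero] using (continuousAt_const_rpow (b := 0) hb).tendsto
  exact hcont.comp hψ

theorem tendsto_pow_const_mul_const_pow_fib_of_abs_lt_one (k : ℕ) {r : ℝ} (hr : |r| < 1) :
    Tendsto (fun n : ℕ ↦ (n : ℝ) ^ k * r ^ Nat.fib n) atTop (𝓝 0) := by
  have hgeom : Tendsto (fun n : ℕ ↦ (n : ℝ) ^ k * |r| ^ n) atTop (𝓝 0) :=
    tendsto_pow_const_mul_const_pow_of_abs_lt_one k (by rwa [abs_abs])
  refine squeeze_zero_norm' ?_ hgeom
  filter_upwards [eventually_ge_atTop 5] with n hn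
  have hle : |r| ^ Nat.fib n ≤ |r| ^ n :=
    pow_le_pow_of_le_one (abs_nonneg r) hr.le (Nat.le_fib_self hn)
  rw [norm_mul, norm_pow, norm_pow, norm_natCast, norm_eq_abs]
  gcongr

theorem tendsto_pow_const_mul_pow_fib_div_pow_fib_succ (k : ℕ) {a b : ℝ} (hb : 0 < b)
    (hab : |a| < b ^ φ) :
    Tendsto (fun n : ℕ ↦ (n : ℝ) ^ k * (a ^ Nat.fib n / b ^ Nat.fib (n + 1))) atTop (𝓝 0) := by
  have hr : |a / b ^ φ| < 1 := by
    have hbφ : 0 < b ^ φ := rpow_pos_of_pos hb φ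
    rwa [abs_div, abs_of_pos hbφ, div_lt_one hbφ]
  have hlim := (tendsto_pow_const_mul_const_pow_fib_of_abs_lt_one k hr).div
    (tendsto_rpow_goldenConj_pow hb.ne') one_ne_zero
  simpa only [pow_fib_div_pow_fib_succ_eq a hb, ← mul_div_assoc, zero_div, Pi.div_def] using hlim

theorem eight_fifths_lt_goldenRatio : 8 / 5 < φ := by
  have hsqrt : 11 / 5 < √5 := lt_sqrt_of_sq_lt (by norm_num)
  rw [goldenRatio]
  linarith

theorem three_lt_two_rpow_goldenRatio : (3 : ℝ) < 2 ^ φ := by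
  have hpow : ((2 : ℝ) ^ (8 / 5 : ℝ)) ^ 5 = 2 ^ 8 := by
    rw [← rpow_mul_natCast zero_le_two, ← rpow_natCast]
    norm_num
  calc (3 : ℝ) < 2 ^ (8 / 5 : ℝ) :=
        lt_of_pow_lt_pow_left₀ 5 (by positivity) (by rw [hpow]; norm_num)
    _ < 2 ^ φ := rpow_lt_rpow_of_exponent_lt one_lt_two eight_fifths_lt_goldenRatio

/-- Eventually 3^{Fₙ} / 2^{F_{n+1}} < 1/n. -/
theorem three_pow_fib_div_two_pow_fib_succ_lt_one_div :
    ∃ N : ℕ, ∀ n : ℕ, N ≤ n →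
      (3 : ℝ) ^ (Nat.fib n) / (2 : ℝ) ^ (Nat.fib (n + 1)) < 1 / n := by
  have hlim : Tendsto (fun n : ℕ ↦ (n : ℝ) ^ 1 * (3 ^ Nat.fib n / 2 ^ Nat.fib (n + 1)))
      atTop (𝓝 0) :=
    tendsto_pow_const_mul_pow_fib_div_pow_fib_succ 1 two_pos
      (by simpa using three_lt_two_rpow_goldenRatio)
  rw [← eventually_atTop]
  filter_upwards [hlim.eventually_lt_const one_pos, eventually_gt_atTop 0] with n hlt hn
  rwa [lt_div_iff₀' (Nat.cast_pos.2 hn), ← pow_one (n : ℝ)]
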